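/- arXiv:2508.12965 — 9 statements merged into one kernel-verified Lean document; each statement's English description precedes it below -/
import Mathlib

section
/- Let w : ℂ → ℂ be an entire function satisfying the Airy equation w''(z) = z·w(z) for all z ∈ ℂ, with w'(0) = 0 and w(0) ≠ 0. Then every zero of w lies on one of the three rays {z ∈ ℂ : Arg(z) = π/3 + 2kπ/3, k ∈ ℤ}; equivalently, if w(z) = 0 then z³ is a negative real number. -/
/-!
Energy identity on the segment from `0` to a zero `z` of `w`. The function `u t = w (t z)` on
`[0, 1]` satisfies `u'' = z³ t u`, `u'(0) = 0` and `u(1) = 0`, so integrating the derivative of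
`u' * conj u` gives `0 = ∫ |u'|² + z³ ∫ t |u|²`. The second integral is positive because
`u 0 ≠ 0`, hence `z³` is a nonpositive real number, and it is nonzero because `w 0 ≠ 0`.
-/

/-- Every zero of an entire solution of the Airy equation `w'' = z w` with `w'(0) = 0`,
`w(0) ≠ 0`, lies on one of the rays `Arg z = π/3 + 2kπ/3`; equivalently, `z^3` is a
negative real number at every zero `z` of `w`. -/
theorem stmt_3 (w : ℂ → ℂ) (hw : Differentiable ℂ w)
    (heq : ∀ z : ℂ, deriv (deriv w) z = z * w z)
    (h0 : deriv w 0 = 0) (hw0 : w 0 ≠ 0) :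
    ∀ z : ℂ, w z = 0 → ∃ r : ℝ, r < 0 ∧ z ^ 3 = (r : ℂ) := by
  intro z hz
  have hz0 : z ≠ 0 := by
    rintro rfl
    exact hw0 hz
  have hw' : Differentiable ℂ (deriv w) := by
    have h : ContDiff ℂ 2 w := hw.contDiff
    exact (h.deriv' (n := 1)).differentiable (by norm_num)
  have hline : ∀ t : ℝ, HasDerivAt (fun s : ℝ => (s : ℂ) * z) z t := fun t => by
    simpa using (Complex.ofRealCLM.hasDerivAt (x := t)).mul_const z
  have hu : ∀ t : ℝ, HasDerivAt (fun s : ℝ => w (s * z)) (deriv w (t * z) * z) t := fun t =>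
    (hw (t * z)).hasDerivAt.comp t (hline t)
  have hv : ∀ t : ℝ, HasDerivAt (fun s : ℝ => deriv w (s * z) * z)
      (t * z * w (t * z) * z * z) t := fun t => by
    have h := ((hw' (t * z)).hasDerivAt.comp t (hline t)).mul_const z
    rw [heq] at h
    exact h
  have huc : Continuous fun s : ℝ => w (s * z) :=
    hw.continuous.comp (by fun_prop)
  have hvc : Continuous fun s : ℝ => deriv w (s * z) * z :=
    (hw'.continuous.comp (by fun_prop)).mul continuous_const
  have hF : ∀ t : ℝ, HasDerivAt
      (fun s : ℝ => deriv w (s * z) * z * (starRingEnd ℂ) (w (s * z)))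
      (z ^ 3 * ((t * Complex.normSq (w (t * z)) : ℝ) : ℂ) +
        ((Complex.normSq (deriv w (t * z) * z) : ℝ) : ℂ)) t := fun t => by
    have h := (hv t).mul (hu t).star
    refine HasDerivAt.congr_deriv h ?_
    rw [Complex.ofReal_mul, Complex.normSq_eq_conj_mul_self, Complex.normSq_eq_conj_mul_self]
    simp only [Complex.star_def]
    ring
  have hBc : Continuous fun t : ℝ => t * Complex.normSq (w (t * z)) :=
    continuous_id.mul (Complex.continuous_normSq.comp huc)
  have hAc : Continuous fun t : ℝ => Complex.normSq (deriv w (t * z) * z) :=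
    Complex.continuous_normSq.comp hvc
  have hBc' : Continuous fun t : ℝ => z ^ 3 * ((t * Complex.normSq (w (t * z)) : ℝ) : ℂ) :=
    continuous_const.mul (Complex.continuous_ofReal.comp hBc)
  have hAc' : Continuous fun t : ℝ => ((Complex.normSq (deriv w (t * z) * z) : ℝ) : ℂ) :=
    Complex.continuous_ofReal.comp hAc
  have hint := intervalIntegral.integral_eq_sub_of_hasDerivAt (a := 0) (b := 1)
    (fun t _ => hF t) ((hBc'.add hAc').intervalIntegrable _ _)
  rw [intervalIntegral.integral_add (hBc'.intervalIntegrable _ _) (hAc'.intervalIntegrable _ _),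
    intervalIntegral.integral_const_mul, intervalIntegral.integral_ofReal,
    intervalIntegral.integral_ofReal] at hint
  simp only [Complex.ofReal_one, one_mul, hz, Complex.ofReal_zero, zero_mul, h0, map_zero,
    mul_zero, sub_zero] at hint
  have hA : 0 ≤ ∫ t in (0 : ℝ)..1, Complex.normSq (deriv w (t * z) * z) :=
    intervalIntegral.integral_nonneg zero_le_one fun t _ => Complex.normSq_nonneg _
  have hB : 0 < ∫ t in (0 : ℝ)..1, t * Complex.normSq (w (t * z)) := by
    refine intervalIntegral.integral_pos zero_lt_one hBc.continuousOn
      (fun t ht => mul_nonneg ht.1.le (Complex.normSq_nonneg _)) ?_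
    -- The weight `t` vanishes at `0`, so a point near but not equal to `0` is needed.
    have hne : ∀ᶠ t : ℝ in nhds 0, w (t * z) ≠ 0 :=
      huc.continuousAt.eventually_ne (by simpa using hw0)
    obtain ⟨t, ⟨hwt, ht1⟩, ht0⟩ := (((hne.and (eventually_lt_nhds zero_lt_one)).filter_mono
      nhdsWithin_le_nhds).and (self_mem_nhdsWithin (s := Set.Ioi (0 : ℝ)))).exists
    exact ⟨t, ⟨le_of_lt ht0, ht1.le⟩, mul_pos ht0 (Complex.normSq_pos.2 hwt)⟩
  set A := ∫ t in (0 : ℝ)..1, Complex.normSq (deriv w (t * z) * z)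
  set B := ∫ t in (0 : ℝ)..1, t * Complex.normSq (w (t * z))
  have hBne : (B : ℂ) ≠ 0 := by exact_mod_cast hB.ne'
  have hr : z ^ 3 = ((-A / B : ℝ) : ℂ) := by
    push_cast
    rw [eq_div_iff hBne]
    linear_combination hint
  refine ⟨-A / B, lt_of_le_of_ne (div_nonpos_of_nonpos_of_nonneg (by linarith) hB.le) ?_, hr⟩
  intro h
  rw [h, Complex.ofReal_zero] at hr
  exact hz0 (pow_eq_zero_iff (by norm_num) |>.1 hr)
end

section
/- Let w : ℂ → ℂ be an entire function satisfying the Airy equation w''(z) = z·w(z) for all z ∈ ℂ, with w'(0) = 0 and w(0) ≠ 0. Then w has no zeros in the open sector {z ∈ ℂ : z ≠ 0 and Arg(z) ∈ (−π/3, π/3)}; that is, w(z) ≠ 0 for every nonzero z whose argument lies strictly between −π/3 and π/3. -/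
/-!
Along the segment `t ↦ t z` from `0` to a hypothetical zero `z`, put `g t = w (t z)`, so that
`g'' = z³ t g`, and multiply `(g' ḡ)' = |g'|² + z³ t |g|²` by `a = exp (-3 i θ / 2)` with
`θ = Arg z`. Since `Re a` and `Re (a z³)` are both positive when `|θ| < π/3`, the function
`F = Re (a g' ḡ)` is nondecreasing on `[0, 1]`. It vanishes at both ends, as `g' 0 = 0` and
`g 1 = 0`, hence it vanishes identically; then `F' = 0` forces `g = 0` on `(0, 1)`, and continuity
contradicts `w 0 ≠ 0`.
-/

/-- A rotation sending both `1` and `z ^ 3` into the open right half-plane: the unit complex number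
of argument `-3 θ / 2`, where `θ = arg z`. -/
lemma exists_rotation (z : ℂ) (hz : z ≠ 0)
    (harg : Complex.arg z ∈ Set.Ioo (-(Real.pi / 3)) (Real.pi / 3)) :
    ∃ a : ℂ, 0 < a.re ∧ 0 < (a * z ^ 3).re := by
  obtain ⟨h1, h2⟩ := harg
  set θ := Complex.arg z with hθ
  have hcos : 0 < Real.cos (3 * θ / 2) :=
    Real.cos_pos_of_mem_Ioo ⟨by linarith, by linarith⟩
  have hr : 0 < ‖z‖ ^ 3 := pow_pos (norm_pos_iff.mpr hz) 3
  refine ⟨Complex.exp (((-(3 * θ / 2) : ℝ) : ℂ) * Complex.I), ?_, ?_⟩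
  · rw [Complex.exp_ofReal_mul_I_re, Real.cos_neg]
    exact hcos
  · have : Complex.exp (((-(3 * θ / 2) : ℝ) : ℂ) * Complex.I) * z ^ 3
        = ((‖z‖ ^ 3 : ℝ) : ℂ) * Complex.exp (((3 * θ / 2 : ℝ) : ℂ) * Complex.I) := by
      conv_lhs => rw [← Complex.norm_mul_exp_arg_mul_I z, ← hθ]
      rw [mul_pow, ← Complex.exp_nat_mul, mul_left_comm, ← Complex.exp_add]
      push_cast
      congr 2
      ring
    rw [this, Complex.re_ofReal_mul, Complex.exp_ofReal_mul_I_re]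
    exact mul_pos hr hcos

/-- An entire solution of the Airy equation `w'' = z w` with `w'(0) = 0`, `w(0) ≠ 0`
has no zeros in the open sector `{z ≠ 0 : Arg z ∈ (-π/3, π/3)}`. -/
theorem stmt_4 (w : ℂ → ℂ) (hw : Differentiable ℂ w)
    (heq : ∀ z : ℂ, deriv (deriv w) z = z * w z)
    (h0 : deriv w 0 = 0) (hw0 : w 0 ≠ 0) :
    ∀ z : ℂ, z ≠ 0 → Complex.arg z ∈ Set.Ioo (-(Real.pi / 3)) (Real.pi / 3) →
      w z ≠ 0 := by
  intro z hz harg hwz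
  obtain ⟨a, ha, haz⟩ := exists_rotation z hz harg
  have hline (t : ℝ) : HasDerivAt (fun t : ℝ => (t : ℂ) * z) z t := by
    simpa using (Complex.ofRealCLM.hasDerivAt (x := t)).mul_const z
  set g : ℝ → ℂ := fun t => w (t * z) with hg_def
  set h : ℝ → ℂ := fun t => deriv w (t * z) * z with hh_def
  have hg (t : ℝ) : HasDerivAt g (h t) t :=
    HasDerivAt.comp (h₂ := w) t (hw _).hasDerivAt (hline t)
  have hw' : Differentiable ℂ (deriv w) := hw.deriv
  have hh (t : ℝ) : HasDerivAt h (z ^ 3 * t * g t) t := by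
    have := (HasDerivAt.comp (h₂ := deriv w) t (hw' _).hasDerivAt (hline t)).mul_const z
    rw [heq] at this
    exact this.congr_deriv (by simp only [hg_def]; ring)
  set F : ℝ → ℝ := fun t => (a * (h t * star (g t))).re with hF_def
  have hF (t : ℝ) : HasDerivAt F
      (a.re * Complex.normSq (h t) + (a * z ^ 3).re * t * Complex.normSq (g t)) t := by
    have h1 := Complex.reCLM.hasFDerivAt.comp_hasDerivAt t
      (((hh t).mul (hg t).star).const_mul a)
    refine h1.congr_deriv ?_
    have e : a * (z ^ 3 * t * g t * star (g t) + h t * star (h t))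
        = ((Complex.normSq (h t) : ℝ) : ℂ) * a
          + ((t * Complex.normSq (g t) : ℝ) : ℂ) * (a * z ^ 3) := by
      push_cast
      rw [← Complex.mul_conj, ← Complex.mul_conj]
      simp only [Complex.star_def]
      ring
    rw [e, Complex.reCLM_apply, Complex.add_re, Complex.re_ofReal_mul, Complex.re_ofReal_mul]
    ring
  have hmono : MonotoneOn F (Set.Icc 0 1) := by
    refine monotoneOn_of_deriv_nonneg (convex_Icc 0 1)
      (fun t _ => (hF t).continuousAt.continuousWithinAt)
      (fun t _ => (hF t).differentiableAt.differentiableWithinAt) (fun t ht => ?_)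
    rw [interior_Icc] at ht
    rw [(hF t).deriv]
    have := Complex.normSq_nonneg (h t)
    have := Complex.normSq_nonneg (g t)
    have := ht.1.le
    positivity
  have hF0 : F 0 = 0 := by simp [hF_def, hh_def, h0]
  have hF1 : F 1 = 0 := by simp [hF_def, hg_def, hwz]
  have hFz (t : ℝ) (ht : t ∈ Set.Icc (0 : ℝ) 1) : F t = 0 :=
    le_antisymm (hF1 ▸ hmono ht ⟨zero_le_one, le_rfl⟩ ht.2)
      (hF0 ▸ hmono ⟨le_rfl, zero_le_one⟩ ht ht.1)
  have hgz (t : ℝ) (ht : t ∈ Set.Ioo (0 : ℝ) 1) : g t = 0 := by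
    have hev : F =ᶠ[nhds t] fun _ => 0 := by
      filter_upwards [isOpen_Ioo.mem_nhds ht] with s hs using hFz s ⟨hs.1.le, hs.2.le⟩
    have hd := (hF t).unique ((hasDerivAt_const t (0 : ℝ)).congr_of_eventuallyEq hev)
    have h1 : 0 ≤ a.re * Complex.normSq (h t) := mul_nonneg ha.le (Complex.normSq_nonneg _)
    have h2 : 0 < (a * z ^ 3).re * t := mul_pos haz ht.1
    have h3 := Complex.normSq_nonneg (g t)
    rw [← Complex.normSq_eq_zero]
    nlinarith
  have hcont : Continuous g := continuous_iff_continuousAt.mpr fun t => (hg t).continuousAt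
  have hcl : closure (Set.Ioo (0 : ℝ) 1) ⊆ {t | g t = 0} :=
    closure_minimal hgz (isClosed_eq hcont continuous_const)
  rw [closure_Ioo zero_ne_one] at hcl
  have : g 0 = 0 := hcl ⟨le_rfl, zero_le_one⟩
  exact hw0 (by simpa [hg_def] using this)
end

section
/- There exists a universal constant C > 0, independent of M, ξ, f and h, with the following property. Let M > 0, ξ ∈ ℝ, let h : [0,M] → ℂ be continuous, and let f : [0,M] → ℂ be twice continuously differentiable with f''(y) = i·ξ·y·f(y) − h(y) for all y ∈ [0,M], f'(0) = 0 and f(M) = 0. Then ξ²·∫₀^M y²|f(y)|² dy + |ξ|^{5/3}·∫₀^M y|f(y)|² dy + |ξ|^{4/3}·∫₀^M |f(y)|² dy + |ξ|·∫₀^M y|f'(y)|² dy + |ξ|^{2/3}·∫₀^M |f'(y)|² dy + ∫₀^M |f''(y)|² dy ≤ C·∫₀^M |h(y)|² dy. -/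
/-!
The estimate comes from a single multiplier. Write `r = |ξ|^(1/3)` and `ξ = σ r³` with `σ = ±1`. The quantity

`Q = 55 r² Re(f' f̄) + r² σ Im(f' f̄) + (113/3) r³ σ y Im(f' f̄) + r³ y Re(f' f̄) + (46/3) r⁴ y |f|²`

vanishes at `0` (since `f'(0) = 0`) and at `M` (since `f(M) = 0`), so `∫ Q' = 0`. Inserting the
equation for `f''`, each of the five terms of `Q'` controls one of the weighted quantities
`r²|f'|²`, `r⁵ y|f|²`, `r⁶ y²|f|²`, `r³ y|f'|²`, `r⁴|f|²`, up to errors handled by Young's inequality,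
and `|f''|² ≤ 2 r⁶ y²|f|² + 2|h|²` by the equation. The coefficients of `Q` are those for which all
errors other than multiples of `|h|²` are absorbed. Hence the sum of the six integrands is at most
`200 |h|² + Q'` pointwise (`pointwise_bound`), and integrating gives the claim with `C = 200`.
-/

open MeasureTheory

/-- The pointwise inequality behind the estimate, in real coordinates: `f = u + iv`, `f' = p + iq`,
`h = m + in`, and `a + ib = iξy f - h` is the value of `f''`. The bracket on the right is the
derivative of the multiplier `Q`. -/
lemma pointwise_bound (r σ ξ y u v p q m n a b : ℝ) (hσ : σ ^ 2 = 1)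
    (hξ : ξ = σ * r ^ 3) (ha : a = -(ξ * y * v) - m) (hb : b = ξ * y * u - n) :
    r ^ 6 * (y ^ 2 * (u ^ 2 + v ^ 2)) + r ^ 5 * (y * (u ^ 2 + v ^ 2)) + r ^ 4 * (u ^ 2 + v ^ 2)
      + r ^ 3 * (y * (p ^ 2 + q ^ 2)) + r ^ 2 * (p ^ 2 + q ^ 2) + (a ^ 2 + b ^ 2)
    ≤ 200 * (m ^ 2 + n ^ 2)
      + (55 * r ^ 2 * (a * u + p * p + (b * v + q * q))
        + r ^ 2 * σ * (b * u + q * p - (a * v + p * q))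
        + 113 / 3 * r ^ 3 * σ * ((q * u - p * v) + y * (b * u + q * p - (a * v + p * q)))
        + r ^ 3 * ((p * u + q * v) + y * (a * u + p * p + (b * v + q * q)))
        + 46 / 3 * r ^ 4 * ((u ^ 2 + v ^ 2) + y * (2 * (u * p + v * q)))) := by
  have hσξ : σ * ξ = r ^ 3 := by rw [hξ]; linear_combination r ^ 3 * hσ
  have hξ2 : ξ ^ 2 = r ^ 6 := by rw [hξ]; linear_combination r ^ 6 * hσ
  have hS : a * u + p * p + (b * v + q * q) = p ^ 2 + q ^ 2 - (m * u + n * v) := by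
    rw [ha, hb]; ring
  have hT : σ * (b * u + q * p - (a * v + p * q))
      = r ^ 3 * (y * (u ^ 2 + v ^ 2)) - σ * (n * u - m * v) := by
    rw [ha, hb]; linear_combination (y * (u ^ 2 + v ^ 2)) * hσξ
  have i1 : r ^ 2 * (m * u + n * v) ≤ r ^ 4 * (u ^ 2 + v ^ 2) / 12 + 3 * (m ^ 2 + n ^ 2) := by
    nlinarith [sq_nonneg (r ^ 2 * u - 6 * m), sq_nonneg (r ^ 2 * v - 6 * n)]
  have i2 : r ^ 2 * (σ * (n * u - m * v))
      ≤ r ^ 4 * (u ^ 2 + v ^ 2) / 12 + 3 * (m ^ 2 + n ^ 2) := by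
    have e1 : 0 ≤ r ^ 4 * u ^ 2 - 12 * (r ^ 2 * σ * u * n) + 36 * n ^ 2 := by
      linear_combination sq_nonneg (r ^ 2 * u - 6 * σ * n) + 36 * n ^ 2 * hσ
    have e2 : 0 ≤ r ^ 4 * v ^ 2 + 12 * (r ^ 2 * σ * v * m) + 36 * m ^ 2 := by
      linear_combination sq_nonneg (r ^ 2 * v + 6 * σ * m) + 36 * m ^ 2 * hσ
    linarith
  have i3 : r ^ 3 * (y * (σ * (n * u - m * v)))
      ≤ r ^ 6 * (y ^ 2 * (u ^ 2 + v ^ 2)) / 2 + (m ^ 2 + n ^ 2) / 2 := by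
    have e1 : 0 ≤ r ^ 6 * y ^ 2 * u ^ 2 - 2 * (r ^ 3 * y * σ * u * n) + n ^ 2 := by
      linear_combination sq_nonneg (r ^ 3 * y * u - σ * n) + n ^ 2 * hσ
    have e2 : 0 ≤ r ^ 6 * y ^ 2 * v ^ 2 + 2 * (r ^ 3 * y * σ * v * m) + m ^ 2 := by
      linear_combination sq_nonneg (r ^ 3 * y * v + σ * m) + m ^ 2 * hσ
    linarith
  have i3' : -(r ^ 3 * (σ * (q * u - p * v)))
      ≤ r ^ 2 * (p ^ 2 + q ^ 2) + r ^ 4 * (u ^ 2 + v ^ 2) / 4 := by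
    have e1 : 0 ≤ r ^ 4 * u ^ 2 + 4 * (r ^ 3 * σ * u * q) + 4 * (r ^ 2 * q ^ 2) := by
      linear_combination sq_nonneg (r ^ 2 * u + 2 * σ * (r * q)) + 4 * r ^ 2 * q ^ 2 * hσ
    have e2 : 0 ≤ r ^ 4 * v ^ 2 - 4 * (r ^ 3 * σ * v * p) + 4 * (r ^ 2 * p ^ 2) := by
      linear_combination sq_nonneg (r ^ 2 * v - 2 * σ * (r * p)) + 4 * r ^ 2 * p ^ 2 * hσ
    linarith
  have i4 : r ^ 3 * (y * (m * u + n * v))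
      ≤ r ^ 6 * (y ^ 2 * (u ^ 2 + v ^ 2)) / 2 + (m ^ 2 + n ^ 2) / 2 := by
    linarith [sq_nonneg (r ^ 3 * y * u - m), sq_nonneg (r ^ 3 * y * v - n)]
  have i4' : -(r ^ 3 * (p * u + q * v))
      ≤ r ^ 2 * (p ^ 2 + q ^ 2) + r ^ 4 * (u ^ 2 + v ^ 2) / 4 := by
    linarith [sq_nonneg (r ^ 2 * u + 2 * (r * p)), sq_nonneg (r ^ 2 * v + 2 * (r * q))]
  have i5 : -(r ^ 4 * (y * (2 * (u * p + v * q))))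
      ≤ r ^ 6 * (y ^ 2 * (u ^ 2 + v ^ 2)) + r ^ 2 * (p ^ 2 + q ^ 2) := by
    linarith [sq_nonneg (r ^ 3 * y * u + r * p), sq_nonneg (r ^ 3 * y * v + r * q)]
  have i6 : a ^ 2 + b ^ 2 ≤ 2 * (r ^ 6 * (y ^ 2 * (u ^ 2 + v ^ 2))) + 2 * (m ^ 2 + n ^ 2) := by
    rw [ha, hb, ← hξ2]
    linarith [sq_nonneg (ξ * y * v - m), sq_nonneg (ξ * y * u + n)]
  have hT1 : r ^ 2 * σ * (b * u + q * p - (a * v + p * q))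
      = r ^ 5 * (y * (u ^ 2 + v ^ 2)) - r ^ 2 * (σ * (n * u - m * v)) := by
    linear_combination r ^ 2 * hT
  have hT2 : 113 / 3 * r ^ 3 * σ * ((q * u - p * v) + y * (b * u + q * p - (a * v + p * q)))
      = 113 / 3 * (r ^ 3 * (σ * (q * u - p * v)) + r ^ 6 * (y ^ 2 * (u ^ 2 + v ^ 2))
        - r ^ 3 * (y * (σ * (n * u - m * v)))) := by
    linear_combination 113 / 3 * r ^ 3 * y * hT
  rw [hT1, hT2, hS]
  have hH : 0 ≤ m ^ 2 + n ^ 2 := by positivity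
  linarith

/-- Frequency-by-frequency energy estimate for the degenerate Airy-type boundary-value
problem `f'' = iξy f - h` on `[0,M]` with `f'(0) = 0`, `f(M) = 0`. -/
theorem stmt_6 :
    ∃ C : ℝ, 0 < C ∧ ∀ (M ξ : ℝ), 0 < M → ∀ (h f : ℝ → ℂ),
      ContinuousOn h (Set.Icc 0 M) → ContDiff ℝ 2 f →
      (∀ y ∈ Set.Icc (0 : ℝ) M,
        deriv (deriv f) y = Complex.I * (ξ : ℂ) * (y : ℂ) * f y - h y) →
      deriv f 0 = 0 → f M = 0 →
      ξ ^ 2 * (∫ y in Set.Icc (0 : ℝ) M, y ^ 2 * ‖f y‖ ^ 2)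
        + |ξ| ^ ((5 : ℝ) / 3) * (∫ y in Set.Icc (0 : ℝ) M, y * ‖f y‖ ^ 2)
        + |ξ| ^ ((4 : ℝ) / 3) * (∫ y in Set.Icc (0 : ℝ) M, ‖f y‖ ^ 2)
        + |ξ| * (∫ y in Set.Icc (0 : ℝ) M, y * ‖deriv f y‖ ^ 2)
        + |ξ| ^ ((2 : ℝ) / 3) * (∫ y in Set.Icc (0 : ℝ) M, ‖deriv f y‖ ^ 2)
        + (∫ y in Set.Icc (0 : ℝ) M, ‖deriv (deriv f) y‖ ^ 2)
      ≤ C * ∫ y in Set.Icc (0 : ℝ) M, ‖h y‖ ^ 2 := by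
  refine ⟨200, by norm_num, ?_⟩
  intro M ξ hM h f hh hf heq hf0 hfM
  obtain ⟨r, hr⟩ : ∃ r : ℝ, r = |ξ| ^ ((1 : ℝ) / 3) := ⟨_, rfl⟩
  have hpow : ∀ k : ℕ, |ξ| ^ ((k : ℝ) / 3) = r ^ k := by
    intro k
    rw [hr, ← Real.rpow_natCast, ← Real.rpow_mul (abs_nonneg ξ)]
    congr 1; ring
  have h5 : |ξ| ^ ((5 : ℝ) / 3) = r ^ 5 := by exact_mod_cast hpow 5
  have h4 : |ξ| ^ ((4 : ℝ) / 3) = r ^ 4 := by exact_mod_cast hpow 4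
  have h2 : |ξ| ^ ((2 : ℝ) / 3) = r ^ 2 := by exact_mod_cast hpow 2
  have h3 : |ξ| = r ^ 3 := by
    rw [← hpow 3]; norm_num
  have h6 : ξ ^ 2 = r ^ 6 := by rw [← sq_abs, h3]; ring
  -- `σ` is chosen with `σ² = 1` also when `ξ = 0`, unlike `SignType.sign`.
  obtain ⟨σ, hσ, hξ⟩ : ∃ σ : ℝ, σ ^ 2 = 1 ∧ ξ = σ * r ^ 3 := by
    rcases abs_choice ξ with hc | hc
    · exact ⟨1, by norm_num, by rw [← h3, hc]; ring⟩
    · exact ⟨-1, by norm_num, by rw [← h3, hc]; ring⟩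
  rw [h5, h4, h2, h3, h6]
  have hf1 : ContDiff ℝ 1 (deriv f) := by
    have : ContDiff ℝ (1 + 1) f := by simpa [one_add_one_eq_two] using hf
    exact (contDiff_succ_iff_deriv.1 this).2.2
  have cf : Continuous f := hf.continuous
  have cf1 : Continuous (deriv f) := hf1.continuous
  have cf2 : Continuous (deriv (deriv f)) := hf1.continuous_deriv le_rfl
  have df : ∀ y, HasDerivAt f (deriv f y) y := fun y =>
    (hf.differentiable (by norm_num) y).hasDerivAt
  have df1 : ∀ y, HasDerivAt (deriv f) (deriv (deriv f) y) y := fun y =>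
    (hf1.differentiable (by norm_num) y).hasDerivAt
  have du : ∀ y, HasDerivAt (fun t => (f t).re) (deriv f y).re y := fun y =>
    Complex.reCLM.hasFDerivAt.comp_hasDerivAt y (df y)
  have dv : ∀ y, HasDerivAt (fun t => (f t).im) (deriv f y).im y := fun y =>
    Complex.imCLM.hasFDerivAt.comp_hasDerivAt y (df y)
  have dp : ∀ y, HasDerivAt (fun t => (deriv f t).re) (deriv (deriv f) y).re y := fun y =>
    Complex.reCLM.hasFDerivAt.comp_hasDerivAt y (df1 y)
  have dq : ∀ y, HasDerivAt (fun t => (deriv f t).im) (deriv (deriv f) y).im y := fun y =>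
    Complex.imCLM.hasFDerivAt.comp_hasDerivAt y (df1 y)
  have hns : ∀ z : ℂ, ‖z‖ ^ 2 = z.re ^ 2 + z.im ^ 2 := fun z => by
    rw [Complex.sq_norm, Complex.normSq_apply]; ring
  -- `Q'` is the derivative of the multiplier, in the real coordinates of `pointwise_bound`.
  obtain ⟨Q', hQ'⟩ : ∃ Q' : ℝ → ℝ, Q' = fun y =>
      55 * r ^ 2 * ((deriv (deriv f) y).re * (f y).re + (deriv f y).re * (deriv f y).re
        + ((deriv (deriv f) y).im * (f y).im + (deriv f y).im * (deriv f y).im))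
      + r ^ 2 * σ * ((deriv (deriv f) y).im * (f y).re + (deriv f y).im * (deriv f y).re
        - ((deriv (deriv f) y).re * (f y).im + (deriv f y).re * (deriv f y).im))
      + 113 / 3 * r ^ 3 * σ * (((deriv f y).im * (f y).re - (deriv f y).re * (f y).im)
        + y * ((deriv (deriv f) y).im * (f y).re + (deriv f y).im * (deriv f y).re
        - ((deriv (deriv f) y).re * (f y).im + (deriv f y).re * (deriv f y).im)))
      + r ^ 3 * (((deriv f y).re * (f y).re + (deriv f y).im * (f y).im)
        + y * ((deriv (deriv f) y).re * (f y).re + (deriv f y).re * (deriv f y).re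
        + ((deriv (deriv f) y).im * (f y).im + (deriv f y).im * (deriv f y).im)))
      + 46 / 3 * r ^ 4 * (((f y).re ^ 2 + (f y).im ^ 2)
        + y * (2 * ((f y).re * (deriv f y).re + (f y).im * (deriv f y).im))) := ⟨_, rfl⟩
  have cQ' : Continuous Q' := by
    rw [hQ']
    have := Complex.continuous_re
    have := Complex.continuous_im
    fun_prop
  have hQint : ∫ y in (0 : ℝ)..M, Q' y = 0 := by
    have dS := fun y => ((dp y).mul (du y)).add ((dq y).mul (dv y))
    have dT := fun y => ((dq y).mul (du y)).sub ((dp y).mul (dv y))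
    have dN := fun y => ((du y).pow 2).add ((dv y).pow 2)
    have dQ := fun y => (((((dS y).const_mul (55 * r ^ 2)).add ((dT y).const_mul (r ^ 2 * σ))).add
      (((hasDerivAt_id y).mul (dT y)).const_mul (113 / 3 * r ^ 3 * σ))).add
      (((hasDerivAt_id y).mul (dS y)).const_mul (r ^ 3))).add
      (((hasDerivAt_id y).mul (dN y)).const_mul (46 / 3 * r ^ 4))
    rw [intervalIntegral.integral_eq_sub_of_hasDerivAt (fun y _ => (dQ y).congr_deriv ?_)
      (cQ'.intervalIntegrable _ _)]
    · simp [hf0, hfM]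
    · rw [hQ']
      simp only [Pi.add_apply, Pi.sub_apply, Pi.mul_apply, Pi.pow_apply, id]
      push_cast
      ring
  have hIcc : ∀ g : ℝ → ℝ, ∫ y in Set.Icc (0 : ℝ) M, g y = ∫ y in (0 : ℝ)..M, g y := fun g => by
    rw [integral_Icc_eq_integral_Ioc, intervalIntegral.integral_of_le hM.le]
  have ih : IntervalIntegrable (fun y => ‖h y‖ ^ 2) volume 0 M := by
    apply ContinuousOn.intervalIntegrable
    rw [Set.uIcc_of_le hM.le]
    exact hh.norm.pow 2
  have ii : ∀ g : ℝ → ℝ, Continuous g → IntervalIntegrable g volume 0 M :=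
    fun g hg => hg.intervalIntegrable _ _
  simp only [hIcc]
  calc _ = ∫ y in (0 : ℝ)..M, (r ^ 6 * (y ^ 2 * ‖f y‖ ^ 2) + r ^ 5 * (y * ‖f y‖ ^ 2)
        + r ^ 4 * ‖f y‖ ^ 2 + r ^ 3 * (y * ‖deriv f y‖ ^ 2) + r ^ 2 * ‖deriv f y‖ ^ 2
        + ‖deriv (deriv f) y‖ ^ 2) := by
        rw [intervalIntegral.integral_add (ii _ (by fun_prop)) (ii _ (by fun_prop)),
          intervalIntegral.integral_add (ii _ (by fun_prop)) (ii _ (by fun_prop)),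
          intervalIntegral.integral_add (ii _ (by fun_prop)) (ii _ (by fun_prop)),
          intervalIntegral.integral_add (ii _ (by fun_prop)) (ii _ (by fun_prop)),
          intervalIntegral.integral_add (ii _ (by fun_prop)) (ii _ (by fun_prop))]
        simp only [intervalIntegral.integral_const_mul]
    _ ≤ ∫ y in (0 : ℝ)..M, (200 * ‖h y‖ ^ 2 + Q' y) := by
        apply intervalIntegral.integral_mono_on hM.le (ii _ (by fun_prop))
          ((ih.const_mul 200).add (ii _ cQ'))
        intro y hy
        have e := heq y hy
        simp only [hns, hQ']
        apply pointwise_bound r σ ξ y _ _ _ _ _ _ _ _ hσ hξ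
        · rw [e]; simp
        · rw [e]; simp
    _ = 200 * ∫ y in (0 : ℝ)..M, ‖h y‖ ^ 2 := by
        rw [intervalIntegral.integral_add (ih.const_mul 200) (ii _ cQ'), hQint,
          intervalIntegral.integral_const_mul, add_zero]
end

section
/- Let M > 0 and ξ ∈ ℝ, let h : [0,M] → ℂ be continuous, and let f : [0,M] → ℂ be twice continuously differentiable with f''(y) = i·ξ·y·f(y) − h(y) for all y ∈ [0,M], f'(0) = 0 and f(M) = 0. Then both ∫₀^M |f'(y)|² dy and |ξ|·∫₀^M y·|f(y)|² dy are bounded by (∫₀^M |h|²)^{1/2}·(∫₀^M |f|²)^{1/2}. -/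
/-!
The boundary conditions kill the boundary term of `f' * conj f` at both ends of `[0, M]`, so
integrating its derivative and inserting the equation gives the energy identity
`∫ h * conj f = ∫ |f'|² + i ξ ∫ y |f|²` (`energy_identity`). The two integrals on the right being
real, they are up to the factor `ξ` the real and imaginary parts of the left side, whose modulus
is at most the product of the `L²` norms of `h` and `f` (`norm_integral_mul_conj_le`).
-/

open MeasureTheory

/-- Cauchy–Schwarz in `L²(0, M)`. -/
lemma norm_integral_mul_conj_le {M : ℝ} {h f : ℝ → ℂ} (hh : ContinuousOn h (Set.Icc 0 M))
    (hf : ContinuousOn f (Set.Icc 0 M)) :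
    ‖∫ y in Set.Icc (0 : ℝ) M, h y * (starRingEnd ℂ) (f y)‖ ≤
      Real.sqrt (∫ y in Set.Icc (0 : ℝ) M, ‖h y‖ ^ 2) *
        Real.sqrt (∫ y in Set.Icc (0 : ℝ) M, ‖f y‖ ^ 2) := by
  have memLp {g : ℝ → ℂ} (hg : ContinuousOn g (Set.Icc 0 M)) :
      MemLp g (ENNReal.ofReal 2) (volume.restrict (Set.Icc 0 M)) := by
    rw [ENNReal.ofReal_ofNat, memLp_two_iff_integrable_sq_norm
      (hg.aestronglyMeasurable measurableSet_Icc)]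
    exact (hg.norm.pow 2).integrableOn_compact isCompact_Icc
  have holder := integral_mul_norm_le_Lp_mul_Lq Real.HolderConjugate.two_two (memLp hh) (memLp hf)
  simp only [Real.rpow_ofNat, ← Real.sqrt_eq_rpow] at holder
  refine (norm_integral_le_integral_norm _).trans ?_
  simpa only [norm_mul, RCLike.norm_conj] using holder

lemma energy_identity {M ξ : ℝ} (hM : 0 < M) {h f : ℝ → ℂ}
    (hh : ContinuousOn h (Set.Icc 0 M)) (hf : ContDiff ℝ 2 f)
    (heq : ∀ y ∈ Set.Icc (0 : ℝ) M,
      deriv (deriv f) y = Complex.I * (ξ : ℂ) * (y : ℂ) * f y - h y)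
    (hf0 : deriv f 0 = 0) (hfM : f M = 0) :
    ∫ y in Set.Icc (0 : ℝ) M, h y * (starRingEnd ℂ) (f y) =
      ((∫ y in Set.Icc (0 : ℝ) M, ‖deriv f y‖ ^ 2 : ℝ) : ℂ) +
        Complex.I * ξ * ((∫ y in Set.Icc (0 : ℝ) M, y * ‖f y‖ ^ 2 : ℝ) : ℂ) := by
  have hf1 : ContDiff ℝ 1 (deriv f) := hf.deriv' (n := 1)
  have cf : Continuous f := hf.continuous
  have cf1 : Continuous (deriv f) := hf1.continuous
  have cf2 : Continuous (deriv (deriv f)) := hf1.continuous_deriv le_rfl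
  have parts := intervalIntegral.integral_deriv_mul_eq_sub (a := 0) (b := M)
    (u := deriv f) (v := fun y => (starRingEnd ℂ) (f y))
    (u' := deriv (deriv f)) (v' := fun y => (starRingEnd ℂ) (deriv f y))
    (fun y _ => (hf1.differentiable (by norm_num) y).hasDerivAt)
    (fun y _ => ((hf.differentiable (by norm_num) y).hasDerivAt).star)
    (cf2.intervalIntegrable _ _)
    ((Complex.continuous_conj.comp cf1).intervalIntegrable _ _)
  rw [hf0, hfM, map_zero, mul_zero, zero_mul, sub_zero,
    intervalIntegral.integral_of_le hM.le, ← integral_Icc_eq_integral_Ioc] at parts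
  have int1 : IntegrableOn (fun y => ((‖deriv f y‖ ^ 2 : ℝ) : ℂ)) (Set.Icc 0 M) :=
    Continuous.integrableOn_Icc (by fun_prop)
  have int2 : IntegrableOn (fun y => Complex.I * ξ * ((y * ‖f y‖ ^ 2 : ℝ) : ℂ)) (Set.Icc 0 M) :=
    Continuous.integrableOn_Icc (by fun_prop)
  have int3 : IntegrableOn (fun y => h y * (starRingEnd ℂ) (f y)) (Set.Icc 0 M) :=
    (hh.mul (Complex.continuous_conj.comp cf).continuousOn).integrableOn_compact isCompact_Icc
  have pointwise : ∀ y ∈ Set.Icc (0 : ℝ) M,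
      deriv (deriv f) y * (starRingEnd ℂ) (f y) + deriv f y * (starRingEnd ℂ) (deriv f y) =
      (((‖deriv f y‖ ^ 2 : ℝ) : ℂ) + Complex.I * ξ * ((y * ‖f y‖ ^ 2 : ℝ) : ℂ)) -
        h y * (starRingEnd ℂ) (f y) := by
    intro y hy
    rw [heq y hy]
    push_cast
    rw [← Complex.mul_conj', ← Complex.mul_conj']
    ring
  rw [setIntegral_congr_fun measurableSet_Icc pointwise, integral_sub (by exact int1.add int2) int3,
    integral_add int1 int2, integral_const_mul, integral_complex_ofReal,
    integral_complex_ofReal] at parts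
  exact (sub_eq_zero.mp parts).symm

/-- Basic energy identity consequences for `f'' = iξy f - h` on `[0,M]` with
`f'(0) = 0`, `f(M) = 0`: both `∫|f'|²` and `|ξ|∫ y|f|²` are bounded by
`(∫|h|²)^{1/2} (∫|f|²)^{1/2}`. -/
theorem stmt_7 (M ξ : ℝ) (hM : 0 < M) (h f : ℝ → ℂ)
    (hh : ContinuousOn h (Set.Icc 0 M)) (hf : ContDiff ℝ 2 f)
    (heq : ∀ y ∈ Set.Icc (0 : ℝ) M,
      deriv (deriv f) y = Complex.I * (ξ : ℂ) * (y : ℂ) * f y - h y)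
    (hf0 : deriv f 0 = 0) (hfM : f M = 0) :
    (∫ y in Set.Icc (0 : ℝ) M, ‖deriv f y‖ ^ 2) ≤
        Real.sqrt (∫ y in Set.Icc (0 : ℝ) M, ‖h y‖ ^ 2) *
          Real.sqrt (∫ y in Set.Icc (0 : ℝ) M, ‖f y‖ ^ 2) ∧
      |ξ| * (∫ y in Set.Icc (0 : ℝ) M, y * ‖f y‖ ^ 2) ≤
        Real.sqrt (∫ y in Set.Icc (0 : ℝ) M, ‖h y‖ ^ 2) *
          Real.sqrt (∫ y in Set.Icc (0 : ℝ) M, ‖f y‖ ^ 2) := by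
  have bound := norm_integral_mul_conj_le hh hf.continuous.continuousOn
  rw [energy_identity hM hh hf heq hf0 hfM] at bound
  constructor
  · refine le_trans ?_ ((Complex.re_le_norm _).trans bound)
    simp [-Complex.ofReal_pow]
  · refine le_trans ?_ ((Complex.abs_im_le_norm _).trans bound)
    have nonneg : 0 ≤ ∫ y in Set.Icc (0 : ℝ) M, y * ‖f y‖ ^ 2 :=
      setIntegral_nonneg measurableSet_Icc fun y hy => mul_nonneg hy.1 (by positivity)
    rw [Complex.add_im, Complex.ofReal_im, zero_add, Complex.im_mul_ofReal, Complex.I_mul_im,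
      Complex.ofReal_re, abs_mul, abs_of_nonneg nonneg]
end

section
/- Let M > 0 and ξ ∈ ℝ with ξ ≠ 0. If f : [0,M] → ℂ is twice continuously differentiable with f''(y) = i·ξ·y·f(y) for all y ∈ [0,M], f'(0) = 0 and f(M) = 0, then f is identically zero on [0,M]. -/
/-!
The real part of the energy identity suffices, in differential form. Let `g = Re (f' * conj f)`.
Since `f'' * conj f = iξy|f|²` is purely imaginary, `g' = |f'|² ≥ 0`, so `g` is monotone on `[0,M]`;
the boundary conditions give `g 0 = g M = 0`, hence `g = 0`. As `(|f|²)' = 2g`, the function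
`|f|²` is constant on `[0,M]`, and it vanishes at `M`.
-/

/-- Uniqueness for the frequency-reduced degenerate boundary-value problem: if `ξ ≠ 0`
and `f'' = iξy f` on `[0,M]` with `f'(0) = 0` and `f(M) = 0`, then `f ≡ 0` on `[0,M]`. -/
theorem stmt_9 (M ξ : ℝ) (hM : 0 < M) (hξ : ξ ≠ 0) (f : ℝ → ℂ)
    (hf : ContDiff ℝ 2 f)
    (heq : ∀ y ∈ Set.Icc (0 : ℝ) M,
      deriv (deriv f) y = Complex.I * (ξ : ℂ) * (y : ℂ) * f y)
    (hf0 : deriv f 0 = 0) (hfM : f M = 0) :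
    ∀ y ∈ Set.Icc (0 : ℝ) M, f y = 0 := by
  have hd (y : ℝ) : HasDerivAt f (deriv f y) y :=
    (hf.differentiable (by norm_num) y).hasDerivAt
  have hf' : ContDiff ℝ 1 (deriv f) := ContDiff.deriv' (n := 1) (by rwa [one_add_one_eq_two])
  have hdd (y : ℝ) : HasDerivAt (deriv f) (deriv (deriv f) y) y :=
    (hf'.differentiable (by norm_num) y).hasDerivAt
  -- The real inner product `inner ℝ (f y) (f' y)` is `Re (f' y * conj (f y))`.
  have hg (y : ℝ) := (hd y).inner ℝ (hdd y)
  have hmono : MonotoneOn (fun y => inner ℝ (f y) (deriv f y)) (Set.Icc 0 M) := by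
    refine monotoneOn_of_deriv_nonneg (convex_Icc 0 M)
      (fun y _ => (hg y).continuousAt.continuousWithinAt)
      (fun y _ => (hg y).differentiableAt.differentiableWithinAt) fun y hy => ?_
    have horth : inner ℝ (f y) (deriv (deriv f) y) = 0 := by
      rw [heq y (interior_subset hy), Complex.inner]
      simp
      ring
    rw [(hg y).deriv, horth, zero_add]
    exact real_inner_self_nonneg
  have hg0 : ∀ y ∈ Set.Icc (0 : ℝ) M, inner ℝ (f y) (deriv f y) = 0 := by
    intro y hy
    have h1 := hmono (Set.left_mem_Icc.2 hM.le) hy hy.1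
    have h2 := hmono hy (Set.right_mem_Icc.2 hM.le) hy.2
    simp only [hf0, hfM, inner_zero_right, inner_zero_left] at h1 h2
    exact le_antisymm h2 h1
  have hconst : ∀ y ∈ Set.Icc (0 : ℝ) M, ‖f y‖ ^ 2 = ‖f 0‖ ^ 2 := by
    refine constant_of_has_deriv_right_zero
      (fun y _ => (hd y).norm_sq.continuousAt.continuousWithinAt) fun y hy => ?_
    have h := (hd y).norm_sq
    rw [hg0 y (Set.Ico_subset_Icc_self hy), mul_zero] at h
    exact h.hasDerivWithinAt
  intro y hy
  have h := (hconst y hy).trans (hconst M (Set.right_mem_Icc.2 hM.le)).symm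
  simpa [hfM] using h
end

section
/- Let M > 0 and ξ ∈ ℝ. For every continuous function h : [0,M] → ℂ there exists a twice continuously differentiable function f : [0,M] → ℂ satisfying f''(y) = i·ξ·y·f(y) − h(y) for all y ∈ [0,M], f'(0) = 0 and f(M) = 0. -/
/-!
The proof is a shooting argument. The initial value problem `f'' = iξy f - h`, `f(0) = a`,
`f'(0) = 0` is solvable on `[0,M]` for every `a` (`exists_ivp`): after the substitution
`f(y) = exp(λy) v(y)` with `λ` large, the twice integrated equation is a fixed point problem for a
`1/2`-Lipschitz map on `C([0,M], ℂ)`.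

Let `φ` be the solution with `h = 0`, `φ(0) = 1`, and `p` the solution for `h` with `p(0) = 0`.
Then `f = p - (p(M)/φ(M)) φ` solves the boundary value problem as soon as `φ(M) ≠ 0`. This last
point (`ivp_end_ne_zero`) uses that the coefficient `iξy` is purely imaginary:
`Re(φ' φ̄)' = |φ'|² + Re(iξy|φ|²) = |φ'|² ≥ 0`, so `Re(φ' φ̄) ≥ 0`, so `|φ|²`, whose derivative is
`2 Re(φ' φ̄)`, is nondecreasing and `|φ(M)| ≥ |φ(0)| = 1`.
-/

open Set

/-- Integration gains a factor `1/l` in the sup norm weighted by `exp(-l t)`. -/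
lemma norm_integral_le_exp {l C t : ℝ} (hl : 0 < l) (ht : 0 ≤ t) {w : ℝ → ℂ}
    (hw : ∀ r ∈ Icc 0 t, ‖w r‖ ≤ C * Real.exp (l * r)) (hC : 0 ≤ C) :
    ‖∫ r in (0 : ℝ)..t, w r‖ ≤ C / l * Real.exp (l * t) := by
  have hd : ∀ r ∈ uIcc 0 t,
      HasDerivAt (fun r => C / l * Real.exp (l * r)) (C * Real.exp (l * r)) r := by
    intro r _
    have h1 : HasDerivAt (fun r : ℝ => l * r) l r := by
      simpa using (hasDerivAt_id r).const_mul l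
    refine (h1.exp.const_mul (C / l)).congr_deriv ?_
    field_simp
  have hi : IntervalIntegrable (fun r => C * Real.exp (l * r)) MeasureTheory.volume 0 t :=
    Continuous.intervalIntegrable (by fun_prop) _ _
  have h2 := intervalIntegral.norm_integral_le_of_norm_le ht
    (Filter.Eventually.of_forall fun r hr => hw r (Ioc_subset_Icc_self hr)) hi
  rw [intervalIntegral.integral_eq_sub_of_hasDerivAt hd hi] at h2
  have : 0 ≤ C / l * Real.exp (l * 0) := by positivity
  linarith

/-- The initial value problem with `f(0) = a`, `f'(0) = 0`. The functions `f`, `g = f'` and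
`k = f''` live on all of `ℝ`; the equation is required on `[0,M]` only. -/
lemma exists_ivp (M ξ : ℝ) (hM : 0 < M) (h : ℝ → ℂ) (hh : Continuous h) (a : ℂ) :
    ∃ f g k : ℝ → ℂ, (∀ y, HasDerivAt f (g y) y) ∧ (∀ y, HasDerivAt g (k y) y) ∧
      Continuous k ∧ f 0 = a ∧ g 0 = 0 ∧
      ∀ y ∈ Icc (0 : ℝ) M, k y = Complex.I * (ξ : ℂ) * (y : ℂ) * f y - h y := by
  set l : ℝ := 2 * |ξ| * M + 1 with hl
  have hl1 : 1 ≤ l := by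
    have : 0 ≤ 2 * |ξ| * M := by positivity
    linarith
  have hl0 : 0 < l := by linarith
  -- `K v` is the right-hand side of the equation for `f = exp(l y) v`, extended to `ℝ`;
  -- `G v` and `F v` are its first and second primitives with the prescribed initial values.
  let K : C(Icc (0 : ℝ) M, ℂ) → ℝ → ℂ := fun v s =>
    Complex.I * (ξ : ℂ) * (s : ℂ) * ((Real.exp (l * s) : ℝ) * v (projIcc 0 M hM.le s)) - h s
  have hK : ∀ v, Continuous (K v) := by
    intro v
    have : Continuous fun s => v (projIcc 0 M hM.le s) := v.continuous.comp continuous_projIcc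
    simp only [K]
    fun_prop
  let G : C(Icc (0 : ℝ) M, ℂ) → ℝ → ℂ := fun v t => ∫ s in (0 : ℝ)..t, K v s
  have hG : ∀ v t, HasDerivAt (G v) (K v t) t := fun v t =>
    intervalIntegral.integral_hasDerivAt_right ((hK v).intervalIntegrable _ _)
      ((hK v).stronglyMeasurableAtFilter _ _) (hK v).continuousAt
  have hGc : ∀ v, Continuous (G v) := fun v =>
    continuous_iff_continuousAt.2 fun t => (hG v t).continuousAt
  let F : C(Icc (0 : ℝ) M, ℂ) → ℝ → ℂ := fun v t => a + ∫ s in (0 : ℝ)..t, G v s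
  have hF : ∀ v t, HasDerivAt (F v) (G v t) t := fun v t =>
    (intervalIntegral.integral_hasDerivAt_right ((hGc v).intervalIntegrable _ _)
      ((hGc v).stronglyMeasurableAtFilter _ _) (hGc v).continuousAt).const_add a
  have hFc : ∀ v, Continuous (F v) := fun v =>
    continuous_iff_continuousAt.2 fun t => (hF v t).continuousAt
  let T : C(Icc (0 : ℝ) M, ℂ) → C(Icc (0 : ℝ) M, ℂ) := fun v =>
    ⟨fun t => (Real.exp (-(l * t)) : ℝ) * F v t, by
      have := hFc v
      fun_prop⟩
  have hT : ContractingWith (1 / 2 : NNReal) T := by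
    refine ⟨by
      rw [← NNReal.coe_lt_coe]
      norm_num, LipschitzWith.of_dist_le_mul fun v w => ?_⟩
    rw [ContinuousMap.dist_le (by positivity)]
    rintro ⟨t, ht⟩
    set d := dist v w with hd
    have hd0 : 0 ≤ d := dist_nonneg
    have bK : ∀ s ∈ Icc (0 : ℝ) M, ‖K v s - K w s‖ ≤ (|ξ| * M * d) * Real.exp (l * s) := by
      intro s hs
      have e : K v s - K w s = Complex.I * (ξ : ℂ) * (s : ℂ) * ((Real.exp (l * s) : ℝ) *
          (v (projIcc 0 M hM.le s) - w (projIcc 0 M hM.le s))) := by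
        simp only [K]
        ring
      have hvw : ‖v (projIcc 0 M hM.le s) - w (projIcc 0 M hM.le s)‖ ≤ d := by
        rw [← dist_eq_norm]
        exact ContinuousMap.dist_apply_le_dist _
      rw [e]
      simp only [norm_mul, Complex.norm_I, Complex.norm_real, Real.norm_eq_abs, one_mul,
        abs_of_nonneg hs.1, Real.abs_exp]
      have hsM := hs.2
      have hs0 := hs.1
      calc |ξ| * s * (Real.exp (l * s) * _) ≤ |ξ| * M * (Real.exp (l * s) * d) := by gcongr
        _ = _ := by ring
    have bG : ∀ s ∈ Icc (0 : ℝ) M,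
        ‖G v s - G w s‖ ≤ (|ξ| * M * d) / l * Real.exp (l * s) := by
      intro s hs
      simp only [G]
      rw [← intervalIntegral.integral_sub ((hK v).intervalIntegrable _ _)
        ((hK w).intervalIntegrable _ _)]
      exact norm_integral_le_exp hl0 hs.1 (fun r hr => bK r ⟨hr.1, hr.2.trans hs.2⟩)
        (by positivity)
    have bF : ‖F v t - F w t‖ ≤ (|ξ| * M * d) / l / l * Real.exp (l * t) := by
      simp only [F]
      rw [add_sub_add_left_eq_sub, ← intervalIntegral.integral_sub
        ((hGc v).intervalIntegrable _ _) ((hGc w).intervalIntegrable _ _)]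
      exact norm_integral_le_exp hl0 ht.1 (fun r hr => bG r ⟨hr.1, hr.2.trans ht.2⟩)
        (by positivity)
    have e : dist (T v ⟨t, ht⟩) (T w ⟨t, ht⟩) = Real.exp (-(l * t)) * ‖F v t - F w t‖ := by
      rw [dist_eq_norm]
      simp only [T, ContinuousMap.coe_mk]
      rw [← mul_sub, norm_mul, Complex.norm_real, Real.norm_eq_abs, Real.abs_exp]
    have hc : |ξ| * M * d / l / l ≤ 1 / 2 * d := by
      rw [div_div, div_le_iff₀ (by positivity)]
      have h1 : |ξ| * M ≤ 1 / 2 * (l * l) := by nlinarith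
      nlinarith
    rw [e]
    push_cast
    calc Real.exp (-(l * t)) * ‖F v t - F w t‖
        ≤ Real.exp (-(l * t)) * ((|ξ| * M * d) / l / l * Real.exp (l * t)) := by gcongr
      _ = |ξ| * M * d / l / l := by
        rw [Real.exp_neg]
        field_simp
      _ ≤ 1 / 2 * d := hc
  obtain ⟨v, hv⟩ : ∃ v, T v = v := ⟨_, hT.fixedPoint_isFixedPt⟩
  refine ⟨F v, G v, K v, hF v, hG v, hK v, by simp [F], by simp [G], fun y hy => ?_⟩
  have h1 : ((Real.exp (-(l * y)) : ℝ) : ℂ) * F v y = v ⟨y, hy⟩ := congrArg (fun u => u ⟨y, hy⟩) hv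
  have h2 : ((Real.exp (l * y) : ℝ) : ℂ) * v ⟨y, hy⟩ = F v y := by
    rw [← h1, ← mul_assoc, ← Complex.ofReal_mul, ← Real.exp_add]
    simp
  simp only [K]
  rw [projIcc_of_mem hM.le hy, h2]

/-- A nontrivial homogeneous solution with `f'(0) = 0` does not vanish at `M`: `|f|²` is
nondecreasing because the coefficient `iξy` is purely imaginary. -/
lemma ivp_end_ne_zero (M ξ : ℝ) (hM : 0 < M) (f g k : ℝ → ℂ)
    (hf : ∀ y, HasDerivAt f (g y) y) (hg : ∀ y, HasDerivAt g (k y) y)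
    (h0 : f 0 = 1) (g0 : g 0 = 0)
    (hk : ∀ y ∈ Icc (0 : ℝ) M, k y = Complex.I * (ξ : ℂ) * (y : ℂ) * f y) : f M ≠ 0 := by
  have re : ∀ {u : ℝ → ℂ} {u' : ℂ} {y : ℝ}, HasDerivAt u u' y →
      HasDerivAt (fun y => (u y).re) u'.re y := fun h =>
    Complex.reCLM.hasFDerivAt.comp_hasDerivAt _ h
  have im : ∀ {u : ℝ → ℂ} {u' : ℂ} {y : ℝ}, HasDerivAt u u' y →
      HasDerivAt (fun y => (u y).im) u'.im y := fun h =>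
    Complex.imCLM.hasFDerivAt.comp_hasDerivAt _ h
  -- `E = Re(f' f̄)` and `N = |f|²`, written in real and imaginary parts.
  let E : ℝ → ℝ := fun y => (g y).re * (f y).re + (g y).im * (f y).im
  let N : ℝ → ℝ := fun y => (f y).re * (f y).re + (f y).im * (f y).im
  have dE : ∀ y, HasDerivAt E (((k y).re * (f y).re + (g y).re * (g y).re) +
      ((k y).im * (f y).im + (g y).im * (g y).im)) y := fun y =>
    ((re (hg y)).mul (re (hf y))).add ((im (hg y)).mul (im (hf y)))
  have dN : ∀ y, HasDerivAt N (((g y).re * (f y).re + (f y).re * (g y).re) +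
      ((g y).im * (f y).im + (f y).im * (g y).im)) y := fun y =>
    ((re (hf y)).mul (re (hf y))).add ((im (hf y)).mul (im (hf y)))
  have mE : MonotoneOn E (Icc 0 M) := by
    refine monotoneOn_of_deriv_nonneg (convex_Icc 0 M)
      (fun y _ => (dE y).continuousAt.continuousWithinAt)
      (fun y _ => (dE y).differentiableAt.differentiableWithinAt) fun y hy => ?_
    rw [(dE y).deriv, hk y (interior_subset hy)]
    simp
    nlinarith [sq_nonneg (g y).re, sq_nonneg (g y).im]
  have E0 : ∀ y ∈ Icc 0 M, 0 ≤ E y := fun y hy => by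
    have := mE ⟨le_rfl, hM.le⟩ hy hy.1
    simpa [E, g0] using this
  have mN : MonotoneOn N (Icc 0 M) := by
    refine monotoneOn_of_deriv_nonneg (convex_Icc 0 M)
      (fun y _ => (dN y).continuousAt.continuousWithinAt)
      (fun y _ => (dN y).differentiableAt.differentiableWithinAt) fun y hy => ?_
    rw [(dN y).deriv]
    have := E0 y (interior_subset hy)
    simp only [E] at this
    linarith
  intro hfM
  have := mN ⟨le_rfl, hM.le⟩ ⟨hM.le, le_rfl⟩ hM.le
  norm_num [N, h0, hfM] at this

/-- Existence for the frequency-reduced degenerate boundary-value problem: for every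
continuous `h` on `[0,M]` there is a twice continuously differentiable `f` with
`f'' = iξy f - h` on `[0,M]`, `f'(0) = 0` and `f(M) = 0`. -/
theorem stmt_10 (M ξ : ℝ) (hM : 0 < M) (h : ℝ → ℂ)
    (hh : ContinuousOn h (Set.Icc 0 M)) :
    ∃ f : ℝ → ℂ, ContDiff ℝ 2 f ∧
      (∀ y ∈ Set.Icc (0 : ℝ) M,
        deriv (deriv f) y = Complex.I * (ξ : ℂ) * (y : ℂ) * f y - h y) ∧
      deriv f 0 = 0 ∧ f M = 0 := by
  obtain ⟨φ, φ', φ'', d1, d2, c1, i1, i2, e1⟩ :=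
    exists_ivp M ξ hM (fun _ => 0) continuous_const 1
  obtain ⟨p, p', p'', d3, d4, c2, i3, i4, e2⟩ :=
    exists_ivp M ξ hM (IccExtend hM.le ((Icc 0 M).domRestrict h))
      (continuousOn_iff_continuous_domRestrict.1 hh).Icc_extend' 0
  have hφ : φ M ≠ 0 := ivp_end_ne_zero M ξ hM φ φ' φ'' d1 d2 i1 i2 fun y hy => by
    simpa using e1 y hy
  set c : ℂ := p M / φ M with hc
  have D1 : ∀ y, HasDerivAt (fun y => p y - c * φ y) (p' y - c * φ' y) y := fun y =>
    (d3 y).sub ((d1 y).const_mul c)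
  have D2 : ∀ y, HasDerivAt (fun y => p' y - c * φ' y) (p'' y - c * φ'' y) y := fun y =>
    (d4 y).sub ((d2 y).const_mul c)
  have E1 : deriv (fun y => p y - c * φ y) = fun y => p' y - c * φ' y :=
    funext fun y => (D1 y).deriv
  have E2 : deriv (fun y => p' y - c * φ' y) = fun y => p'' y - c * φ'' y :=
    funext fun y => (D2 y).deriv
  refine ⟨fun y => p y - c * φ y, ?_, fun y hy => ?_, ?_, ?_⟩
  · rw [show (2 : WithTop ℕ∞) = 1 + 1 by norm_num, contDiff_succ_iff_deriv]
    refine ⟨fun y => (D1 y).differentiableAt, by simp, ?_⟩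
    rw [E1, contDiff_one_iff_deriv, E2]
    exact ⟨fun y => (D2 y).differentiableAt, by fun_prop⟩
  · rw [E1, E2]
    simp only []
    rw [e1 y hy, e2 y hy, IccExtend_of_mem _ _ hy]
    simp only [domRestrict_apply]
    ring
  · rw [E1]
    simp [i2, i4]
  · simp only [hc]
    field_simp
    simp
end

section
/- There exists a universal constant C > 0 such that for every M > 0, every ξ ∈ ℝ with ξ ≠ 0, and every measurable g : (0,M) → ℂ with ∫₀^M |g|² < ∞ and ∫₀^M y²|g(y)|² dy < ∞, one has |ξ|^{5/6}·|∫₀^M g(y) dy| ≤ C·( |ξ|^{2/3}·(∫₀^M |g(y)|² dy)^{1/2} + |ξ|·(∫₀^M y²|g(y)|² dy)^{1/2} ). -/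
/-!
The estimate is Cauchy–Schwarz against the weight `w y = 1 + (s y)²` with `s = |ξ|^{1/3}`:
`∫ |g| ≤ (∫ w |g|²)^{1/2} (∫ 1/w)^{1/2}`, where `∫_ℝ 1/w = π / s` and
`(∫ w |g|²)^{1/2} ≤ (∫ |g|²)^{1/2} + s (∫ y² |g|²)^{1/2}`. This gives the scale-invariant bound
`weighted_cauchy_schwarz`; multiplying by `|ξ|^{2/3} = s²` and using `s² s^{1/2} = |ξ|^{5/6}`
yields the theorem with `C = √π`.
-/

open MeasureTheory

/-- The total mass of the reciprocal weight dominates its mass on `(0, M]`, uniformly in `M`. -/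
lemma integral_inv_weight_le (M s : ℝ) (hs : 0 < s) :
    IntegrableOn (fun y : ℝ => (1 + (s * y) ^ 2)⁻¹) (Set.Ioc 0 M) ∧
      ∫ y in Set.Ioc (0 : ℝ) M, (1 + (s * y) ^ 2)⁻¹ ≤ Real.pi / s := by
  have hi : Integrable (fun y : ℝ => (1 + (s * y) ^ 2)⁻¹) :=
    integrable_inv_one_add_sq.comp_mul_left' hs.ne'
  refine ⟨hi.integrableOn, ?_⟩
  calc ∫ y in Set.Ioc (0 : ℝ) M, (1 + (s * y) ^ 2)⁻¹
      ≤ ∫ y : ℝ, (1 + (s * y) ^ 2)⁻¹ :=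
        setIntegral_le_integral hi (Filter.Eventually.of_forall fun y => by
          simp only [Pi.zero_apply]; positivity)
    _ = Real.pi / s := by
        rw [Measure.integral_comp_mul_left (fun y : ℝ => (1 + y ^ 2)⁻¹) s,
          integral_univ_inv_one_add_sq, abs_of_pos (inv_pos.2 hs), smul_eq_mul]
        ring

lemma weighted_cauchy_schwarz (M s : ℝ) (hs : 0 < s) (g : ℝ → ℂ) (hg : Measurable g)
    (h0 : IntegrableOn (fun y => ‖g y‖ ^ 2) (Set.Ioc 0 M))
    (h2 : IntegrableOn (fun y => y ^ 2 * ‖g y‖ ^ 2) (Set.Ioc 0 M)) :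
    √s * ‖∫ y in Set.Ioc (0 : ℝ) M, g y‖ ≤
      √Real.pi * (√(∫ y in Set.Ioc (0 : ℝ) M, ‖g y‖ ^ 2)
        + s * √(∫ y in Set.Ioc (0 : ℝ) M, y ^ 2 * ‖g y‖ ^ 2)) := by
  obtain ⟨hwi, hw⟩ := integral_inv_weight_le M s hs
  have hpos : ∀ y : ℝ, 0 < 1 + (s * y) ^ 2 := fun y => by positivity
  set A := ∫ y in Set.Ioc (0 : ℝ) M, ‖g y‖ ^ 2 with hA
  set B := ∫ y in Set.Ioc (0 : ℝ) M, y ^ 2 * ‖g y‖ ^ 2 with hB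
  have hA0 : 0 ≤ A := integral_nonneg fun y => by positivity
  have hB0 : 0 ≤ B := integral_nonneg fun y => by positivity
  let F : ℝ → ℝ := fun y => ‖g y‖ * √(1 + (s * y) ^ 2)
  let H : ℝ → ℝ := fun y => (√(1 + (s * y) ^ 2))⁻¹
  have hF2 : (fun y => F y ^ 2) = fun y => ‖g y‖ ^ 2 + s ^ 2 * (y ^ 2 * ‖g y‖ ^ 2) := by
    funext y
    change (‖g y‖ * √(1 + (s * y) ^ 2)) ^ 2 = _
    rw [mul_pow, Real.sq_sqrt (hpos y).le]
    ring
  have hH2 : (fun y => H y ^ 2) = fun y => (1 + (s * y) ^ 2)⁻¹ := by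
    funext y
    simp only [H, inv_pow, Real.sq_sqrt (hpos y).le]
  have hFH : ∀ y, F y * H y = ‖g y‖ := fun y => by
    have := (Real.sqrt_pos.2 (hpos y)).ne'
    simp only [F, H]
    field_simp
  have hFm : Measurable F := by fun_prop
  have hHm : Measurable H := by fun_prop
  have hFL : MemLp F 2 (volume.restrict (Set.Ioc 0 M)) := by
    rw [memLp_two_iff_integrable_sq hFm.aestronglyMeasurable, hF2]
    exact h0.add (h2.const_mul _)
  have hHL : MemLp H 2 (volume.restrict (Set.Ioc 0 M)) := by
    rw [memLp_two_iff_integrable_sq hHm.aestronglyMeasurable, hH2]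
    exact hwi
  have hFint : ∫ y in Set.Ioc (0 : ℝ) M, F y ^ 2 = A + s ^ 2 * B := by
    rw [hF2, integral_add h0 (h2.const_mul _), integral_const_mul]
  have hHint : ∫ y in Set.Ioc (0 : ℝ) M, H y ^ 2 ≤ Real.pi / s := by
    rw [hH2]; exact hw
  have hCS := integral_mul_le_Lp_mul_Lq_of_nonneg (μ := volume.restrict (Set.Ioc 0 M))
    (f := F) (g := H)
    Real.HolderConjugate.two_two
    (Filter.Eventually.of_forall fun y => by simp only [F, Pi.zero_apply]; positivity)
    (Filter.Eventually.of_forall fun y => by simp only [H, Pi.zero_apply]; positivity)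
    (by simpa using hFL) (by simpa using hHL)
  simp only [hFH, Real.rpow_two, ← Real.sqrt_eq_rpow, hFint] at hCS
  have hAB : √(A + s ^ 2 * B) ≤ √A + s * √B := by
    apply Real.sqrt_le_iff.2
    refine ⟨by positivity, ?_⟩
    have : 0 ≤ √A * (s * √B) := by positivity
    nlinarith [Real.sq_sqrt hA0, Real.sq_sqrt hB0]
  calc √s * ‖∫ y in Set.Ioc (0 : ℝ) M, g y‖
      ≤ √s * (√(A + s ^ 2 * B) * √(∫ y in Set.Ioc (0 : ℝ) M, H y ^ 2)) := by
        gcongr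
        exact (norm_integral_le_integral_norm _).trans hCS
    _ ≤ √s * ((√A + s * √B) * √(Real.pi / s)) := by gcongr
    _ = √Real.pi * (√A + s * √B) := by
        have := (Real.sqrt_pos.2 hs).ne'
        rw [Real.sqrt_div Real.pi_pos.le]
        field_simp

/-- Frequency-by-frequency form of the trace estimate: there is a universal `C > 0` such
that for all `M > 0`, `ξ ≠ 0` and `g ∈ L²(0,M)` with `y·g ∈ L²(0,M)`,
`|ξ|^{5/6} |∫₀^M g| ≤ C (|ξ|^{2/3} (∫|g|²)^{1/2} + |ξ| (∫ y²|g|²)^{1/2})`. -/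
theorem stmt_12 :
    ∃ C : ℝ, 0 < C ∧ ∀ (M ξ : ℝ), 0 < M → ξ ≠ 0 → ∀ g : ℝ → ℂ, Measurable g →
      IntegrableOn (fun y => ‖g y‖ ^ 2) (Set.Ioc 0 M) →
      IntegrableOn (fun y => y ^ 2 * ‖g y‖ ^ 2) (Set.Ioc 0 M) →
      |ξ| ^ ((5 : ℝ) / 6) * ‖∫ y in Set.Ioc (0 : ℝ) M, g y‖ ≤
        C * (|ξ| ^ ((2 : ℝ) / 3) *
              Real.sqrt (∫ y in Set.Ioc (0 : ℝ) M, ‖g y‖ ^ 2)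
            + |ξ| * Real.sqrt (∫ y in Set.Ioc (0 : ℝ) M, y ^ 2 * ‖g y‖ ^ 2)) := by
  refine ⟨√Real.pi, Real.sqrt_pos.2 Real.pi_pos, fun M ξ _ hξ g hg h0 h2 => ?_⟩
  have hr : 0 < |ξ| := abs_pos.2 hξ
  have key := weighted_cauchy_schwarz M (|ξ| ^ ((1 : ℝ) / 3)) (by positivity) g hg h0 h2
  have e1 : |ξ| ^ ((5 : ℝ) / 6) = |ξ| ^ ((2 : ℝ) / 3) * √(|ξ| ^ ((1 : ℝ) / 3)) := by
    rw [Real.sqrt_eq_rpow, ← Real.rpow_mul hr.le, ← Real.rpow_add hr]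
    norm_num
  have e2 : |ξ| ^ ((2 : ℝ) / 3) * |ξ| ^ ((1 : ℝ) / 3) = |ξ| := by
    rw [← Real.rpow_add hr]
    norm_num
  have := mul_le_mul_of_nonneg_left key (by positivity : 0 ≤ |ξ| ^ ((2 : ℝ) / 3))
  rw [e1, mul_assoc]
  refine this.trans (le_of_eq ?_)
  linear_combination
    √Real.pi * √(∫ y in Set.Ioc (0 : ℝ) M, y ^ 2 * ‖g y‖ ^ 2) * e2
end

section
/- There exists a universal constant C > 0 such that for every ε ∈ (0, 1/6] and every measurable g : ℝ → ℂ, ∫_ℝ |g(ξ)| dξ ≤ C·ε^{−1/2}·( ∫_ℝ |ξ|^{1−2ε}|g(ξ)|² dξ )^{1/4}·( ∫_ℝ |ξ|^{1+2ε}|g(ξ)|² dξ )^{1/4}. -/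
/-!
Split `∫ |g|` at `|ξ| = R`. Cauchy–Schwarz against the weight `|ξ| ^ s`
(`lintegral_le_weight`), with `s = 1 - 2ε` on `|ξ| ≤ R` and `s = 1 + 2ε` on `|ξ| > R`, gives
`∫ |g| ≤ (R ^ (2ε) / ε) ^ (1/2) * A ^ (1/2) + (R ^ (-2ε) / ε) ^ (1/2) * B ^ (1/2)`,
where `A`, `B` are the two weighted integrals. Taking `R ^ (2ε) = (B / A) ^ (1/2)` makes both
summands equal to `ε ^ (-1/2) * (A * B) ^ (1/4)`, so `C = 2` works. If `A` or `B` vanishes then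
`g = 0` almost everywhere, and if one is infinite while the other is nonzero the right-hand
side is infinite.
-/

open MeasureTheory
open scoped ENNReal NNReal

lemma setLIntegral_comp_abs_le {f : ℝ → ℝ≥0∞} {T : Set ℝ} (hT : MeasurableSet T) :
    ∫⁻ x in {x : ℝ | |x| ∈ T}, f |x| ≤ 2 * ∫⁻ x in T ∩ Set.Ioi 0, f x := by
  have hS : MeasurableSet {x : ℝ | |x| ∈ T} := measurable_abs hT
  have hF : ∫⁻ x in T ∩ Set.Ioi 0, f x = ∫⁻ x in Set.Ioi 0, T.indicator f x := by
    rw [setLIntegral_indicator hT]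
  have hL : ∫⁻ x in {x : ℝ | |x| ∈ T}, f |x| = ∫⁻ x, T.indicator f |x| := by
    rw [← lintegral_indicator hS]
    rfl
  have hpos : ∫⁻ x in Set.Ioi (0 : ℝ), T.indicator f |x|
      = ∫⁻ x in Set.Ioi 0, T.indicator f x :=
    setLIntegral_congr_fun measurableSet_Ioi fun x hx => by
      simp only [abs_of_pos (Set.mem_Ioi.1 hx)]
  have hneg : ∫⁻ x in Set.Iio (0 : ℝ), T.indicator f |x|
      = ∫⁻ x in Set.Ioi (0 : ℝ), T.indicator f |x| := by
    have h := (Measure.measurePreserving_neg (volume : Measure ℝ)).setLIntegral_comp_preimage_emb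
      (MeasurableEquiv.neg ℝ).measurableEmbedding (fun x => T.indicator f |x|) (Set.Ioi (0 : ℝ))
    simpa using h
  rw [hF, hL, ← lintegral_add_compl _ (measurableSet_Ioi : MeasurableSet (Set.Ioi (0 : ℝ))),
    Set.compl_Ioi, setLIntegral_congr (Iio_ae_eq_Iic (a := (0 : ℝ))).symm, hneg, hpos, two_mul]

/-- Cauchy–Schwarz for `|g| = |ξ| ^ (-s/2) * (|ξ| ^ (s/2) * |g|)`. -/
lemma lintegral_le_weight {g : ℝ → ℂ} (hg : Measurable g) (s : ℝ) (S : Set ℝ) :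
    ∫⁻ ξ in S, (‖g ξ‖₊ : ℝ≥0∞) ≤
      (∫⁻ ξ in S, ENNReal.ofReal (|ξ| ^ (-s))) ^ ((1 : ℝ) / 2) *
      (∫⁻ ξ : ℝ, ENNReal.ofReal (|ξ| ^ s) * (‖g ξ‖₊ : ℝ≥0∞) ^ 2) ^ ((1 : ℝ) / 2) := by
  have hne : ∀ᵐ ξ : ℝ ∂(volume.restrict S), ξ ≠ 0 :=
    ae_restrict_of_ae (by simp [ae_iff])
  have hCS := ENNReal.lintegral_mul_le_Lp_mul_Lq (volume.restrict S)
    Real.HolderConjugate.two_two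
    (f := fun ξ : ℝ => ENNReal.ofReal (|ξ| ^ (-s / 2)))
    (g := fun ξ : ℝ => ENNReal.ofReal (|ξ| ^ (s / 2)) * (‖g ξ‖₊ : ℝ≥0∞))
    (by fun_prop) (by fun_prop)
  have hsq : ∀ (ξ t : ℝ), ENNReal.ofReal (|ξ| ^ (t / 2)) ^ (2 : ℝ)
      = ENNReal.ofReal (|ξ| ^ t) := fun ξ t => by
    rw [ENNReal.ofReal_rpow_of_nonneg (by positivity) (by norm_num),
      ← Real.rpow_mul (abs_nonneg _)]
    congr 2
    ring
  calc ∫⁻ ξ in S, (‖g ξ‖₊ : ℝ≥0∞)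
      = ∫⁻ ξ in S, ENNReal.ofReal (|ξ| ^ (-s / 2)) *
          (ENNReal.ofReal (|ξ| ^ (s / 2)) * (‖g ξ‖₊ : ℝ≥0∞)) := by
        refine lintegral_congr_ae ?_
        filter_upwards [hne] with ξ hξ
        have h0 : 0 < |ξ| := abs_pos.2 hξ
        rw [← mul_assoc, ← ENNReal.ofReal_mul (by positivity), ← Real.rpow_add h0]
        simp [neg_div]
    _ ≤ _ := hCS
    _ ≤ _ := by
        simp only [ENNReal.mul_rpow_of_nonneg _ _ (zero_le_two : (0 : ℝ) ≤ 2), hsq,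
          ENNReal.rpow_two]
        gcongr
        exact Measure.restrict_le_self

lemma lintegral_low {ε R : ℝ} (hε : 0 < ε) (hR : 0 < R) :
    ∫⁻ ξ in {ξ : ℝ | |ξ| ∈ Set.Iic R}, ENNReal.ofReal (|ξ| ^ (-(1 - 2 * ε)))
      ≤ ENNReal.ofReal (R ^ (2 * ε) / ε) := by
  refine (setLIntegral_comp_abs_le (f := fun x => ENNReal.ofReal (x ^ (-(1 - 2 * ε))))
    measurableSet_Iic).trans (le_of_eq ?_)
  have hi : IntervalIntegrable (fun x : ℝ => x ^ (-(1 - 2 * ε))) volume 0 R :=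
    intervalIntegral.intervalIntegrable_rpow' (by linarith)
  rw [Set.inter_comm, Set.Ioi_inter_Iic, ← ofReal_integral_eq_lintegral_ofReal
    ((intervalIntegrable_iff_integrableOn_Ioc_of_le hR.le).1 hi)
    ((ae_restrict_iff' measurableSet_Ioc).2 (.of_forall fun x hx => Real.rpow_nonneg hx.1.le _)),
    ← intervalIntegral.integral_of_le hR.le, integral_rpow (.inl (by linarith)),
    ← ENNReal.ofReal_ofNat, ← ENNReal.ofReal_mul (by norm_num)]
  have : -(1 - 2 * ε) + 1 = 2 * ε := by ring
  rw [this, Real.zero_rpow (by positivity)]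
  congr 1
  field_simp
  simp

lemma lintegral_high {ε R : ℝ} (hε : 0 < ε) (hR : 0 < R) :
    ∫⁻ ξ in {ξ : ℝ | |ξ| ∈ Set.Ioi R}, ENNReal.ofReal (|ξ| ^ (-(1 + 2 * ε)))
      ≤ ENNReal.ofReal (R ^ (-(2 * ε)) / ε) := by
  refine (setLIntegral_comp_abs_le (f := fun x => ENNReal.ofReal (x ^ (-(1 + 2 * ε))))
    measurableSet_Ioi).trans (le_of_eq ?_)
  rw [Set.Ioi_inter_Ioi, max_eq_left hR.le, ← ofReal_integral_eq_lintegral_ofReal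
    (integrableOn_Ioi_rpow_of_lt (by linarith) hR)
    ((ae_restrict_iff' measurableSet_Ioi).2
      (.of_forall fun x hx => Real.rpow_nonneg (hR.trans hx).le _)),
    integral_Ioi_rpow_of_lt (by linarith) hR,
    ← ENNReal.ofReal_ofNat, ← ENNReal.ofReal_mul (by norm_num)]
  have : -(1 + 2 * ε) + 1 = -(2 * ε) := by ring
  rw [this]
  congr 1
  field_simp

/-- The value of either summand at the optimal radius, where `R ^ (2ε) = (b / a) ^ (1/2)`. -/
lemma balanced_term {ε a b : ℝ} (hε : 0 < ε) (ha : 0 < a) (hb : 0 < b) :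
    ENNReal.ofReal ((b / a) ^ ((1 : ℝ) / 2) / ε) ^ ((1 : ℝ) / 2)
        * ENNReal.ofReal a ^ ((1 : ℝ) / 2)
      = ENNReal.ofReal (ε ^ (-(1 : ℝ) / 2)) * ENNReal.ofReal a ^ ((1 : ℝ) / 4)
        * ENNReal.ofReal b ^ ((1 : ℝ) / 4) := by
  have hh : (0 : ℝ) ≤ 1 / 2 := by norm_num
  have hq : (0 : ℝ) ≤ 1 / 4 := by norm_num
  rw [ENNReal.ofReal_rpow_of_nonneg (by positivity) hh,
    ENNReal.ofReal_rpow_of_nonneg ha.le hh, ENNReal.ofReal_rpow_of_nonneg ha.le hq,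
    ENNReal.ofReal_rpow_of_nonneg hb.le hq, ← ENNReal.ofReal_mul (by positivity),
    ← ENNReal.ofReal_mul (by positivity), ← ENNReal.ofReal_mul (by positivity)]
  congr 1
  rw [Real.div_rpow (by positivity) hε.le, ← Real.rpow_mul (by positivity),
    Real.div_rpow hb.le ha.le, neg_div, Real.rpow_neg hε.le]
  have h1 : a ^ ((1 : ℝ) / 2) = a ^ ((1 : ℝ) / 4) * a ^ ((1 : ℝ) / 4) := by
    rw [← Real.rpow_add ha]
    norm_num
  rw [h1, show (1 : ℝ) / 2 * (1 / 2) = 1 / 4 by norm_num]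
  field_simp

/-- Quantitative ε-dependent Fourier-side L¹–L² interpolation:
`∫|g| ≤ C ε^{-1/2} (∫ |ξ|^{1-2ε}|g|²)^{1/4} (∫ |ξ|^{1+2ε}|g|²)^{1/4}`
with `C` independent of `ε ∈ (0, 1/6]`. -/
theorem stmt_14 :
    ∃ C : ℝ, 0 < C ∧ ∀ ε : ℝ, 0 < ε → ε ≤ 1 / 6 → ∀ g : ℝ → ℂ, Measurable g →
      (∫⁻ ξ : ℝ, (‖g ξ‖₊ : ℝ≥0∞)) ≤
        ENNReal.ofReal (C * ε ^ (-(1 : ℝ) / 2))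
          * (∫⁻ ξ : ℝ, ENNReal.ofReal (|ξ| ^ (1 - 2 * ε)) * (‖g ξ‖₊ : ℝ≥0∞) ^ 2)
              ^ ((1 : ℝ) / 4)
          * (∫⁻ ξ : ℝ, ENNReal.ofReal (|ξ| ^ (1 + 2 * ε)) * (‖g ξ‖₊ : ℝ≥0∞) ^ 2)
              ^ ((1 : ℝ) / 4) := by
  refine ⟨2, two_pos, fun ε hε _ g hg => ?_⟩
  have hlow := lintegral_le_weight hg (1 - 2 * ε)
  have hhigh := lintegral_le_weight hg (1 + 2 * ε)
  generalize (∫⁻ ξ : ℝ, ENNReal.ofReal (|ξ| ^ (1 - 2 * ε)) * (‖g ξ‖₊ : ℝ≥0∞) ^ 2) = A at *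
  generalize (∫⁻ ξ : ℝ, ENNReal.ofReal (|ξ| ^ (1 + 2 * ε)) * (‖g ξ‖₊ : ℝ≥0∞) ^ 2) = B at *
  have hc : ENNReal.ofReal (2 * ε ^ (-(1 : ℝ) / 2)) ≠ 0 := by
    rw [Ne, ENNReal.ofReal_eq_zero, not_le]
    positivity
  -- On the whole line the weight integral is infinite, but `∞ * 0 = 0` in `ℝ≥0∞`.
  rcases eq_or_ne A 0 with rfl | hA0
  · exact ((setLIntegral_univ _).symm.trans_le (hlow Set.univ)).trans (by simp)
  rcases eq_or_ne B 0 with rfl | hB0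
  · exact ((setLIntegral_univ _).symm.trans_le (hhigh Set.univ)).trans (by simp)
  have hpow : ∀ X : ℝ≥0∞, X ≠ 0 → X ^ ((1 : ℝ) / 4) ≠ 0 := fun X hX h => by
    rcases ENNReal.rpow_eq_zero_iff.1 h with h | h
    · exact hX h.1
    · norm_num at h
  have htop : (∞ : ℝ≥0∞) ^ ((1 : ℝ) / 4) = ∞ := ENNReal.top_rpow_of_pos (by norm_num)
  rcases eq_or_ne A ∞ with rfl | hA
  · rw [htop, ENNReal.mul_top hc, ENNReal.top_mul (hpow B hB0)]
    exact le_top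
  rcases eq_or_ne B ∞ with rfl | hB
  · rw [htop, ENNReal.mul_top (mul_ne_zero hc (hpow A hA0))]
    exact le_top
  have ha : 0 < A.toReal := ENNReal.toReal_pos hA0 hA
  have hb : 0 < B.toReal := ENNReal.toReal_pos hB0 hB
  rw [← ENNReal.ofReal_toReal hA] at hlow ⊢
  rw [← ENNReal.ofReal_toReal hB] at hhigh ⊢
  generalize A.toReal = a at *
  generalize B.toReal = b at *
  obtain ⟨R, hR, hR1⟩ : ∃ R : ℝ, 0 < R ∧ R ^ (2 * ε) = (b / a) ^ ((1 : ℝ) / 2) := by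
    refine ⟨(b / a) ^ (1 / (4 * ε)), by positivity, ?_⟩
    rw [← Real.rpow_mul (by positivity)]
    congr 1
    field_simp
    norm_num
  have hR2 : R ^ (-(2 * ε)) = (a / b) ^ ((1 : ℝ) / 2) := by
    rw [Real.rpow_neg hR.le, hR1, ← Real.inv_rpow (by positivity), inv_div]
  have h1 := lintegral_low hε hR
  have h2 := lintegral_high hε hR
  rw [hR1] at h1
  rw [hR2] at h2
  have hS : MeasurableSet {ξ : ℝ | |ξ| ∈ Set.Iic R} := measurable_abs measurableSet_Iic
  have hSc : {ξ : ℝ | |ξ| ∈ Set.Iic R}ᶜ = {ξ : ℝ | |ξ| ∈ Set.Ioi R} := by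
    ext
    simp
  rw [← lintegral_add_compl _ hS, hSc]
  calc _ ≤ _ := add_le_add (hlow _) (hhigh _)
    _ ≤ ENNReal.ofReal ((b / a) ^ ((1 : ℝ) / 2) / ε) ^ ((1 : ℝ) / 2)
          * ENNReal.ofReal a ^ ((1 : ℝ) / 2)
        + ENNReal.ofReal ((a / b) ^ ((1 : ℝ) / 2) / ε) ^ ((1 : ℝ) / 2)
          * ENNReal.ofReal b ^ ((1 : ℝ) / 2) := by gcongr
    _ = _ := by
      rw [balanced_term hε ha hb, balanced_term hε hb ha,
        ENNReal.ofReal_mul two_pos.le, ENNReal.ofReal_ofNat]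
      ring
end

section
/- There exists a universal constant C₀ > 0 such that for every α > 0 and every measurable g : ℝ² → ℂ, ∫_{ℝ²} |g(ξ,η)| dξ dη ≤ C₀·((1+α)^{1/2}/α)·( ( ∫_{ℝ²} (1+|η|)⁴·|g(ξ,η)|² dξ dη )^{1/2} + ( ∫_{ℝ²} (1+|ξ|)^{4/3+α}·|g(ξ,η)|² dξ dη )^{1/2} ). -/
/-!
The weights interpolate: for `θ ∈ (0, 1)`, weighted AM–GM gives
`(1+|ξ|)^((4/3+α)(1-θ)) (1+|η|)^(4θ) ≤ (1+|η|)^4 + (1+|ξ|)^(4/3+α)`.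
Cauchy–Schwarz against the product weight on the left therefore bounds `∫∫ |g|` by the right-hand
side of the theorem times the square root of the integral of the reciprocal product weight. That
integral factors into two one-dimensional integrals `∫ (1+|x|)^(-r) dx = 2/(r-1)`, finite as soon as
`4θ > 1` and `(4/3+α)(1-θ) > 1`, that is, `1/4 < θ < (1+3α)/(4+3α)`. The midpoint of this interval
gives `4θ - 1 = 9α/(2(4+3α))` and `(4/3+α)(1-θ) - 1 = 3α/8`, so the product of the two integrals
is `64(4+3α)/(27α²) ≤ 16(1+α)/α²`, and `C₀ = 4` works.
-/

open MeasureTheory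
open scoped ENNReal NNReal

lemma lintegral_one_add_abs_rpow_neg {r : ℝ} (hr : 1 < r) :
    ∫⁻ x : ℝ, ENNReal.ofReal ((1 + |x|) ^ (-r)) = ENNReal.ofReal (2 / (r - 1)) := by
  have hint : Integrable (fun x : ℝ => (1 + |x|) ^ (-r)) := by
    simpa using integrable_one_add_norm (E := ℝ) (μ := volume) (r := r) (by simpa using hr)
  rw [← ofReal_integral_eq_lintegral_ofReal hint
    (Filter.Eventually.of_forall fun x => by positivity)]
  congr 1
  rw [integral_comp_abs (f := fun x : ℝ => (1 + x) ^ (-r))]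
  have hshift : ∫ x in Set.Ioi (0 : ℝ), (1 + x) ^ (-r) = ∫ x in Set.Ioi (1 : ℝ), x ^ (-r) := by
    have h := (measurePreserving_add_left (volume : Measure ℝ) 1).setIntegral_preimage_emb
      (measurableEmbedding_addLeft 1) (fun x : ℝ => x ^ (-r)) (Set.Ioi 1)
    simpa using h
  rw [hshift, integral_Ioi_rpow_of_lt (by linarith) one_pos, Real.one_rpow]
  have h1 : r - 1 ≠ 0 := by linarith
  have h2 : -r + 1 ≠ 0 := by linarith
  field_simp
  ring

/-- Cauchy–Schwarz with a positive weight `P`. -/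
lemma lintegral_le_weighted {P : ℝ × ℝ → ℝ} (hP : Measurable P) (hpos : ∀ p, 0 < P p)
    {u : ℝ × ℝ → ℝ≥0∞} (hu : Measurable u) :
    ∫⁻ p, u p ≤ (∫⁻ p, ENNReal.ofReal (P p)⁻¹) ^ ((1 : ℝ) / 2)
      * (∫⁻ p, ENNReal.ofReal (P p) * u p ^ 2) ^ ((1 : ℝ) / 2) := by
  have key := ENNReal.lintegral_mul_le_Lp_mul_Lq (volume : Measure (ℝ × ℝ))
    Real.HolderConjugate.two_two
    (f := fun p => ENNReal.ofReal (P p)⁻¹ ^ ((1 : ℝ) / 2))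
    (g := fun p => ENNReal.ofReal (P p) ^ ((1 : ℝ) / 2) * u p)
    (by fun_prop) (by fun_prop)
  convert key using 3 with p
  · rw [Pi.mul_apply, ← mul_assoc, ← ENNReal.mul_rpow_of_nonneg _ _ (by norm_num),
      ← ENNReal.ofReal_mul (inv_nonneg.2 (hpos p).le), inv_mul_cancel₀ (hpos p).ne']
    simp
  · refine lintegral_congr fun p => ?_
    rw [← ENNReal.rpow_mul]
    norm_num
  · refine lintegral_congr fun p => ?_
    rw [ENNReal.mul_rpow_of_nonneg _ _ (by norm_num), ← ENNReal.rpow_mul]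
    norm_num

lemma lintegral_inv_weight {r t : ℝ} (hr : 1 < r) (ht : 1 < t) :
    ∫⁻ p : ℝ × ℝ, ENNReal.ofReal ((1 + |p.1|) ^ t * (1 + |p.2|) ^ r)⁻¹
      = ENNReal.ofReal (2 / (t - 1) * (2 / (r - 1))) := by
  have h1 : (0 : ℝ) ≤ 2 / (t - 1) := div_nonneg zero_le_two (by linarith)
  rw [ENNReal.ofReal_mul h1, ← lintegral_one_add_abs_rpow_neg hr,
    ← lintegral_one_add_abs_rpow_neg ht, Measure.volume_eq_prod,
    ← lintegral_prod_mul (by fun_prop) (by fun_prop)]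
  refine lintegral_congr fun p => ?_
  rw [← ENNReal.ofReal_mul (by positivity), mul_inv, Real.rpow_neg (by positivity),
    Real.rpow_neg (by positivity)]

/-- Weighted AM–GM, with the weights `θ, 1 - θ ≤ 1` dropped from the arithmetic mean. -/
lemma weight_le {θ s a b : ℝ} (h0 : 0 ≤ θ) (h1 : θ ≤ 1) (ha : 0 ≤ a) (hb : 0 ≤ b) :
    b ^ (s * (1 - θ)) * a ^ (4 * θ) ≤ a ^ 4 + b ^ s := by
  have h := Real.geom_mean_le_arith_mean2_weighted h0 (sub_nonneg.2 h1)
    (pow_nonneg ha 4) (Real.rpow_nonneg hb s) (by ring)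
  have e : (a ^ 4 : ℝ) ^ θ = a ^ (4 * θ) := by
    rw [Real.rpow_mul ha]
    norm_cast
  rw [e, ← Real.rpow_mul hb] at h
  have hA : 0 ≤ a ^ 4 := pow_nonneg ha 4
  have hB : 0 ≤ b ^ s := Real.rpow_nonneg hb s
  nlinarith [mul_nonneg (sub_nonneg.2 h1) hA, mul_nonneg h0 hB]

/-- Anisotropic two-dimensional L¹–L² bound on the Fourier side:
`∫∫|g| ≤ C₀ ((1+α)^{1/2}/α) ((∫∫ (1+|η|)⁴|g|²)^{1/2} + (∫∫ (1+|ξ|)^{4/3+α}|g|²)^{1/2})`,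
where the first variable of `g` is `ξ` and the second is `η`. -/
theorem stmt_15 :
    ∃ C₀ : ℝ, 0 < C₀ ∧ ∀ α : ℝ, 0 < α → ∀ g : ℝ × ℝ → ℂ, Measurable g →
      (∫⁻ p : ℝ × ℝ, (‖g p‖₊ : ℝ≥0∞)) ≤
        ENNReal.ofReal (C₀ * ((1 + α) ^ ((1 : ℝ) / 2) / α))
          * ((∫⁻ p : ℝ × ℝ, ENNReal.ofReal ((1 + |p.2|) ^ 4) * (‖g p‖₊ : ℝ≥0∞) ^ 2)
                ^ ((1 : ℝ) / 2)
              + (∫⁻ p : ℝ × ℝ,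
                    ENNReal.ofReal ((1 + |p.1|) ^ ((4 : ℝ) / 3 + α)) * (‖g p‖₊ : ℝ≥0∞) ^ 2)
                ^ ((1 : ℝ) / 2)) := by
  refine ⟨4, by norm_num, fun α hα g hg => ?_⟩
  obtain ⟨θ, hθ⟩ : ∃ θ : ℝ, θ = 1 / 2 * (1 / 4 + (1 + 3 * α) / (4 + 3 * α)) := ⟨_, rfl⟩
  have hd : 0 < 4 + 3 * α := by positivity
  have hr : 4 * θ - 1 = 9 * α / (2 * (4 + 3 * α)) := by
    rw [hθ]; field_simp; ring
  have ht : (4 / 3 + α) * (1 - θ) - 1 = 3 * α / 8 := by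
    rw [hθ]; field_simp; ring
  have hr1 : 1 < 4 * θ := by
    have : 0 < 9 * α / (2 * (4 + 3 * α)) := by positivity
    linarith
  have ht1 : 1 < (4 / 3 + α) * (1 - θ) := by
    have : 0 < 3 * α / 8 := by positivity
    linarith
  have h0 : 0 ≤ θ := by linarith
  have h1 : θ ≤ 1 := by
    by_contra! h
    nlinarith [mul_pos (show 0 < 4 / 3 + α by positivity) (sub_pos.2 h)]
  refine (lintegral_le_weighted
    (P := fun p => (1 + |p.1|) ^ ((4 / 3 + α) * (1 - θ)) * (1 + |p.2|) ^ (4 * θ))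
    (by fun_prop) (fun p => by positivity) (u := fun p => (‖g p‖₊ : ℝ≥0∞)) (by fun_prop)).trans ?_
  rw [lintegral_inv_weight hr1 ht1, hr, ht]
  refine mul_le_mul' ?_ ?_
  · rw [ENNReal.ofReal_rpow_of_nonneg (by positivity) (by norm_num)]
    refine ENNReal.ofReal_le_ofReal ?_
    rw [← Real.sqrt_eq_rpow, ← Real.sqrt_eq_rpow]
    refine Real.sqrt_le_iff.2 ⟨by positivity, ?_⟩
    rw [mul_pow, div_pow, Real.sq_sqrt (by positivity)]
    have e : 2 / (3 * α / 8) * (2 / (9 * α / (2 * (4 + 3 * α))))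
        = (64 * (4 + 3 * α) / 27) / α ^ 2 := by
      field_simp; ring
    rw [e, ← mul_div_assoc]
    gcongr
    linarith
  · refine le_trans ?_ (ENNReal.rpow_add_le_add_rpow _ _ (by norm_num) (by norm_num))
    refine ENNReal.rpow_le_rpow ?_ (by norm_num)
    rw [← lintegral_add_left (by fun_prop)]
    refine lintegral_mono fun p => ?_
    rw [← add_mul, ← ENNReal.ofReal_add (by positivity) (by positivity)]
    gcongr
    exact weight_le h0 h1 (by positivity) (by positivity)
end
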